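/- arXiv:1704.03244 — 2 statements merged into one kernel-verified Lean document; each statement's English description precedes it below -/
import Mathlib

section
/- Let Z be a standard normal random variable, and for S_0 > 0, K > 0, σ > 0, r ∈ ℝ, T > 0 set S_T = S_0 exp( (r − σ²/2) T + σ √T Z ). Then the discounted expected call payoff admits the Black–Scholes closed form: e^{−rT} · E[ (S_T − K)^+ ] = S_0 Φ(d_1) − K e^{−rT} Φ(d_2), where d_1 = ( log(S_0/K) + (r + σ²/2) T ) / (σ √T), d_2 = d_1 − σ √T, and Φ is the standard normal cumulative distribution function. -/
open MeasureTheory ProbabilityTheory Filter Set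
open scoped ENNReal NNReal

/-- Black–Scholes closed form for the discounted expected call payoff: if `Z` is
standard normal and `S_T = S₀ exp((r − σ²/2)T + σ√T Z)`, then
`e^{−rT} E[(S_T − K)⁺] = S₀ Φ(d₁) − K e^{−rT} Φ(d₂)`, where
`d₁ = (log(S₀/K) + (r + σ²/2)T)/(σ√T)`, `d₂ = d₁ − σ√T` and `Φ` is the standard
normal cumulative distribution function. -/
theorem black_scholes_call
    {Ω : Type*} [MeasurableSpace Ω] (P : Measure Ω) [IsProbabilityMeasure P]
    (Z : Ω → ℝ) (hZm : Measurable Z) (hZ : Measure.map Z P = gaussianReal 0 1)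
    (S0 K σ r T : ℝ) (hS0 : 0 < S0) (hK : 0 < K) (hσ : 0 < σ) (hT : 0 < T)
    (Φ : ℝ → ℝ)
    (hΦ : ∀ x, Φ x = (Real.sqrt (2 * Real.pi))⁻¹ * ∫ u in Iic x, Real.exp (-u ^ 2 / 2))
    (d1 d2 : ℝ)
    (hd1 : d1 = (Real.log (S0 / K) + (r + σ ^ 2 / 2) * T) / (σ * Real.sqrt T))
    (hd2 : d2 = d1 - σ * Real.sqrt T) :
    Real.exp (-r * T) *
        ∫ ω, max (S0 * Real.exp ((r - σ ^ 2 / 2) * T + σ * Real.sqrt T * Z ω) - K) 0 ∂P =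
      S0 * Φ d1 - K * Real.exp (-r * T) * Φ d2 := by
  set s := σ * Real.sqrt T with hs
  have hspos : 0 < s := mul_pos hσ (Real.sqrt_pos.mpr hT)
  have hs2 : s ^ 2 = σ ^ 2 * T := by rw [hs, mul_pow, Real.sq_sqrt hT.le]
  set c := (Real.sqrt (2 * Real.pi))⁻¹ with hc
  let f : ℝ → ℝ := fun u => Real.exp (-u ^ 2 / 2)
  have hf : Integrable f := by
    have h := integrable_exp_neg_mul_sq (b := 1 / 2) (by norm_num)
    refine h.congr (Eventually.of_forall fun x => ?_)
    simp only [f]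
    congr 1
    ring
  have hΦ' : ∀ a x, Φ x = c * ∫ u, (Iic x).indicator f (a - u) := by
    intro a x
    rw [hΦ, integral_sub_left_eq_self ((Iic x).indicator f) volume a,
      integral_indicator measurableSet_Iic]
  have hfi : ∀ a x, Integrable (fun u => (Iic x).indicator f (a - u)) := by
    intro a x
    exact (hf.indicator measurableSet_Iic).comp_sub_left a
  have hd1' : s * d1 = Real.log (S0 / K) + (r + σ ^ 2 / 2) * T := by
    rw [hd1]; field_simp
  have hmap : ∫ ω, max (S0 * Real.exp ((r - σ ^ 2 / 2) * T + s * Z ω) - K) 0 ∂P =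
      ∫ x, max (S0 * Real.exp ((r - σ ^ 2 / 2) * T + s * x) - K) 0 ∂(gaussianReal 0 1) := by
    rw [← hZ, integral_map hZm.aemeasurable]
    exact Continuous.aestronglyMeasurable (by fun_prop)
  rw [hmap, integral_gaussianReal_eq_integral_smul one_ne_zero, hΦ' s d1, hΦ' 0 d2,
    ← integral_const_mul, ← integral_const_mul, ← integral_const_mul, ← integral_const_mul,
    ← integral_const_mul, ← integral_sub (((hfi s d1).const_mul _).const_mul _)
      (((hfi 0 d2).const_mul _).const_mul _)]
  refine integral_congr_ae (Eventually.of_forall fun x => ?_)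
  have hpdf : gaussianPDFReal 0 1 x = c * Real.exp (-x ^ 2 / 2) := by
    simp [gaussianPDFReal, hc]
  have hKexp : S0 = K * Real.exp (Real.log (S0 / K)) := by
    rw [Real.exp_log (by positivity)]; field_simp
  have hS : S0 * Real.exp ((r - σ ^ 2 / 2) * T + s * x) = K * Real.exp (s * (d2 + x)) := by
    conv_lhs => rw [hKexp]
    rw [mul_assoc, ← Real.exp_add]
    congr 2
    rw [hd2]
    linear_combination (-1 : ℝ) * hd1' + hs2
  have hE : Real.exp (-r * T) * Real.exp ((r - σ ^ 2 / 2) * T + s * x) * Real.exp (-x ^ 2 / 2)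
      = Real.exp (-(s - x) ^ 2 / 2) := by
    rw [← Real.exp_add, ← Real.exp_add]
    congr 1
    linear_combination (1 / 2 : ℝ) * hs2
  simp only [smul_eq_mul, hpdf]
  by_cases hx : 0 ≤ d2 + x
  · have h1 : s - x ∈ Iic d1 := by simp only [mem_Iic]; linarith
    have h2 : 0 - x ∈ Iic d2 := by simp only [mem_Iic]; linarith
    have h3 : 0 ≤ S0 * Real.exp ((r - σ ^ 2 / 2) * T + s * x) - K := by
      rw [hS]
      have := Real.one_le_exp (mul_nonneg hspos.le hx)
      nlinarith
    rw [max_eq_left h3, indicator_of_mem h1, indicator_of_mem h2]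
    simp only [f, zero_sub, neg_sq]
    rw [← hE]
    ring
  · have hx' : d2 + x < 0 := not_le.mp hx
    have h1 : s - x ∉ Iic d1 := by simp only [mem_Iic]; intro h; linarith
    have h2 : 0 - x ∉ Iic d2 := by simp only [mem_Iic]; intro h; linarith
    have h3 : S0 * Real.exp ((r - σ ^ 2 / 2) * T + s * x) - K ≤ 0 := by
      rw [hS]
      have := Real.exp_le_one_iff.mpr (mul_nonpos_of_nonneg_of_nonpos hspos.le hx'.le)
      nlinarith
    rw [max_eq_right h3, indicator_of_notMem h1, indicator_of_notMem h2]
    ring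
end

section
/- Let Z be a standard normal random variable, and for S_0 > 0, K > 0, σ > 0, r ∈ ℝ, T > 0 set S_T = S_0 exp( (r − σ²/2) T + σ √T Z ). Then the discounted expected put payoff admits the Black–Scholes closed form: e^{−rT} · E[ (K − S_T)^+ ] = K e^{−rT} Φ(−d_2) − S_0 Φ(−d_1), where d_1 = ( log(S_0/K) + (r + σ²/2) T ) / (σ √T), d_2 = d_1 − σ √T, and Φ is the standard normal cumulative distribution function. -/
open MeasureTheory ProbabilityTheory Filter Set
open scoped ENNReal NNReal

theorem bs_shift (b s : ℝ) : ∫ x in Iic b, Real.exp (-(x - s) ^ 2 / 2) =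
    ∫ u in Iic (b - s), Real.exp (-u ^ 2 / 2) := by
  rw [← integral_indicator measurableSet_Iic, ← integral_indicator measurableSet_Iic,
    
    ← integral_sub_right_eq_self ((Iic (b - s)).indicator fun u : ℝ => Real.exp (-u ^ 2 / 2)) s]
  congr 1
  ext x
  simp only [indicator, mem_Iic, sub_le_sub_iff_right]

theorem bs_int : Integrable (fun x : ℝ => Real.exp (-x ^ 2 / 2)) := by
  have h := integrable_exp_neg_mul_sq (b := 1 / 2) (by norm_num)
  refine h.congr (Eventually.of_forall fun x => ?_)
  simp only
  congr 1
  ring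

/-- Black–Scholes closed form for the discounted expected put payoff: if `Z` is
standard normal and `S_T = S₀ exp((r − σ²/2)T + σ√T Z)`, then
`e^{−rT} E[(K − S_T)⁺] = K e^{−rT} Φ(−d₂) − S₀ Φ(−d₁)`, where
`d₁ = (log(S₀/K) + (r + σ²/2)T)/(σ√T)`, `d₂ = d₁ − σ√T` and `Φ` is the standard
normal cumulative distribution function. -/
theorem black_scholes_put
    {Ω : Type*} [MeasurableSpace Ω] (P : Measure Ω) [IsProbabilityMeasure P]
    (Z : Ω → ℝ) (hZm : Measurable Z) (hZ : Measure.map Z P = gaussianReal 0 1)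
    (S0 K σ r T : ℝ) (hS0 : 0 < S0) (hK : 0 < K) (hσ : 0 < σ) (hT : 0 < T)
    (Φ : ℝ → ℝ)
    (hΦ : ∀ x, Φ x = (Real.sqrt (2 * Real.pi))⁻¹ * ∫ u in Iic x, Real.exp (-u ^ 2 / 2))
    (d1 d2 : ℝ)
    (hd1 : d1 = (Real.log (S0 / K) + (r + σ ^ 2 / 2) * T) / (σ * Real.sqrt T))
    (hd2 : d2 = d1 - σ * Real.sqrt T) :
    Real.exp (-r * T) *
        ∫ ω, max (K - S0 * Real.exp ((r - σ ^ 2 / 2) * T + σ * Real.sqrt T * Z ω)) 0 ∂P =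
      K * Real.exp (-r * T) * Φ (-d2) - S0 * Φ (-d1) := by
  have hsT : 0 < Real.sqrt T := Real.sqrt_pos.mpr hT
  have hT2 : Real.sqrt T ^ 2 = T := Real.sq_sqrt hT.le
  obtain ⟨s, hs⟩ : ∃ s, s = σ * Real.sqrt T := ⟨_, rfl⟩
  have hspos : 0 < s := by rw [hs]; positivity
  have hs2 : s ^ 2 = σ ^ 2 * T := by rw [hs, mul_pow, hT2]
  rw [← hs] at hd1 hd2 ⊢
  obtain ⟨a, ha⟩ : ∃ a, a = (r - σ ^ 2 / 2) * T := ⟨_, rfl⟩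
  rw [← ha]
  have hd2s : s * d2 = Real.log (S0 / K) + a := by
    rw [hd2, mul_sub, hd1, mul_div_cancel₀ _ hspos.ne', ha, ← sq, hs2]
    ring
  obtain ⟨c, hc⟩ : ∃ c, c = (Real.sqrt (2 * Real.pi))⁻¹ := ⟨_, rfl⟩
  rw [← hc] at hΦ
  have key : ∀ x : ℝ, gaussianPDFReal 0 1 x • max (K - S0 * Real.exp (a + s * x)) 0 =
      (Iic (-d2)).indicator (fun x => (K * c) * Real.exp (-x ^ 2 / 2) -
        (S0 * c * Real.exp (r * T)) * Real.exp (-(x - s) ^ 2 / 2)) x := by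
    intro x
    have hexp : S0 * Real.exp (a + s * x) = K * Real.exp (s * (x + d2)) := by
      have : s * (x + d2) = Real.log (S0 / K) + (a + s * x) := by rw [mul_add, hd2s]; ring
      rw [this, Real.exp_add (Real.log _), Real.exp_log (by positivity)]
      field_simp
    have hpdf : gaussianPDFReal 0 1 x = c * Real.exp (-x ^ 2 / 2) := by
      simp [gaussianPDFReal, hc]
    have hcomb : Real.exp (r * T) * Real.exp (-(x - s) ^ 2 / 2) =
        Real.exp (-x ^ 2 / 2) * Real.exp (a + s * x) := by
      rw [← Real.exp_add, ← Real.exp_add]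
      congr 1
      rw [ha]
      linear_combination (-1 / 2 : ℝ) * hs2
    rw [hpdf, smul_eq_mul]
    by_cases hx : x ≤ -d2
    · rw [indicator_of_mem (mem_Iic.mpr hx), max_eq_left]
      · linear_combination (S0 * c) * hcomb
      · rw [hexp]
        have : Real.exp (s * (x + d2)) ≤ 1 := by
          rw [Real.exp_le_one_iff]
          exact mul_nonpos_of_nonneg_of_nonpos hspos.le (by linarith)
        nlinarith
    · rw [indicator_of_notMem (by simpa using hx), max_eq_right, mul_zero]
      rw [hexp]
      have : 1 ≤ Real.exp (s * (x + d2)) := by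
        rw [Real.one_le_exp_iff]
        exact mul_nonneg hspos.le (by linarith [not_le.mp hx])
      nlinarith
  have h1 : ∫ ω, max (K - S0 * Real.exp (a + s * Z ω)) 0 ∂P =
      ∫ x, max (K - S0 * Real.exp (a + s * x)) 0 ∂(gaussianReal 0 1) := by
    rw [← hZ, integral_map hZm.aemeasurable]
    exact Continuous.aestronglyMeasurable (by fun_prop)
  rw [h1, integral_gaussianReal_eq_integral_smul one_ne_zero, integral_congr_ae
    (Eventually.of_forall key), integral_indicator measurableSet_Iic, integral_sub,
    integral_const_mul, integral_const_mul, bs_shift, hΦ, hΦ]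
  · have e : -d2 - s = -d1 := by rw [hd2]; ring
    have e2 : Real.exp (-r * T) * Real.exp (r * T) = 1 := by
      rw [← Real.exp_add]; simp
    rw [e]
    linear_combination (-(S0 * c * ∫ u in Iic (-d1), Real.exp (-u ^ 2 / 2))) * e2
  · exact (bs_int.const_mul _).integrableOn
  · exact ((bs_int.comp_sub_right s).const_mul _).integrableOn
end
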